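/- Let 𝒻 be a family of 3-element subsets of [n] and let 𝒞 ⊆ 𝒻 be a nonempty subfamily each of whose members intersects every member of 𝒻. If no subset of [n] of size at most 2 intersects every member of 𝒞, then |𝒻| ≤ 19. -/

import Mathlib

/-!
Fix `A ∈ 𝒞` and sort the members `F` of `𝒻` by their trace `S = A ∩ F`, which is nonempty.
As long as `#X < k`, some `C ∈ 𝒞` is disjoint from `X`, so a member `F ⊇ X` of `𝒻` with
`A ∩ F ⊆ X` contains one of the at most `k - 1` points of `C \ A`. Branching on this point `k - #S`
times, from `X = S`, leaves at most `(k - 1) ^ (k - #S)` members with trace `S`. By the binomial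
theorem these bounds add up to `k ^ k - (k - 1) ^ k` over the nonempty `S ⊆ A`, which is
`27 - 8 = 19` for `k = 3`.
-/

section

open Finset

variable {α : Type*} [DecidableEq α]

/-- `T` is a transversal of the family `𝒢`: it intersects every member of `𝒢`. The condition
`τ(𝒢) ≥ k` on the transversal number is expressed as `∀ T, IsTransversal 𝒢 T → k ≤ #T`. -/
def IsTransversal (𝒢 : Finset (Finset α)) (T : Finset α) : Prop :=
  ∀ G ∈ 𝒢, (G ∩ T).Nonempty

variable {𝒻 𝒞 : Finset (Finset α)} {A T U X : Finset α} {d k : ℕ}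

theorem IsTransversal.inter_of_forall_subset (hT : IsTransversal 𝒞 T) (hU : ∀ C ∈ 𝒞, C ⊆ U) :
    IsTransversal 𝒞 (T ∩ U) := by
  intro C hC
  rw [inter_comm T U, ← inter_assoc, inter_eq_left.2 (hU C hC)]
  exact hT C hC

theorem IsTransversal.le_card_of_forall_subset (hT : IsTransversal 𝒞 T) (hU : ∀ C ∈ 𝒞, C ⊆ U)
    (hτ : ∀ T ⊆ U, #T < k → ∃ C ∈ 𝒞, C ∩ T = ∅) : k ≤ #T := by
  by_contra! hT_card
  obtain ⟨C, hC, hCT⟩ := hτ (T ∩ U) inter_subset_right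
    ((card_le_card inter_subset_left).trans_lt hT_card)
  exact (hT.inter_of_forall_subset hU C hC).ne_empty hCT

theorem exists_disjoint_of_card_lt (hτ : ∀ T, IsTransversal 𝒞 T → k ≤ #T) (hX : #X < k) :
    ∃ C ∈ 𝒞, Disjoint C X := by
  by_contra! hmeet
  exact hX.not_ge (hτ X fun C hC => not_disjoint_iff_nonempty_inter.1 (hmeet C hC))

theorem filter_superset_subset_biUnion_insert {C : Finset α} (hCX : Disjoint C X)
    (hC : ∀ F ∈ 𝒻, (C ∩ F).Nonempty) :
    {F ∈ 𝒻 | X ⊆ F ∧ A ∩ F ⊆ X} ⊆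
      (C \ A).biUnion fun v => {F ∈ 𝒻 | insert v X ⊆ F ∧ A ∩ F ⊆ insert v X} := by
  intro F hF
  obtain ⟨hF𝒻, hXF, hAF⟩ := mem_filter.1 hF
  obtain ⟨v, hv⟩ := hC F hF𝒻
  obtain ⟨hvC, hvF⟩ := mem_inter.1 hv
  have hvA : v ∉ A := fun hvA => disjoint_left.1 hCX hvC (hAF (mem_inter.2 ⟨hvA, hvF⟩))
  exact mem_biUnion.2 ⟨v, mem_sdiff.2 ⟨hvC, hvA⟩, mem_filter.2
    ⟨hF𝒻, insert_subset hvF hXF, hAF.trans (subset_insert v X)⟩⟩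

theorem card_filter_superset_le_pow (hcard : ∀ F ∈ 𝒻, #F ≤ k)
    (htrans : ∀ F ∈ 𝒻, IsTransversal 𝒞 F) (hτ : ∀ T, IsTransversal 𝒞 T → k ≤ #T)
    (hd : ∀ C ∈ 𝒞, #(C \ A) ≤ d) (X : Finset α) :
    #{F ∈ 𝒻 | X ⊆ F ∧ A ∩ F ⊆ X} ≤ d ^ (k - #X) := by
  induction hm : k - #X generalizing X with
  | zero =>
    have eq_X : ∀ F ∈ ({F ∈ 𝒻 | X ⊆ F ∧ A ∩ F ⊆ X} : Finset _), F = X := by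
      intro F hF
      obtain ⟨hF𝒻, hXF, -⟩ := mem_filter.1 hF
      exact (eq_of_subset_of_card_le hXF ((hcard F hF𝒻).trans (by omega))).symm
    exact card_le_one.2 fun F hF G hG => (eq_X F hF).trans (eq_X G hG).symm
  | succ m ih =>
    obtain ⟨C, hC, hCX⟩ := exists_disjoint_of_card_lt hτ (X := X) (by omega)
    have card_branch_le : ∀ v ∈ C \ A,
        #{F ∈ 𝒻 | insert v X ⊆ F ∧ A ∩ F ⊆ insert v X} ≤ d ^ m := by
      intro v hv
      have hvX : v ∉ X := disjoint_left.1 hCX (mem_sdiff.1 hv).1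
      exact ih (insert v X) (by rw [card_insert_of_notMem hvX]; omega)
    calc #{F ∈ 𝒻 | X ⊆ F ∧ A ∩ F ⊆ X}
        ≤ #((C \ A).biUnion fun v => {F ∈ 𝒻 | insert v X ⊆ F ∧ A ∩ F ⊆ insert v X}) :=
          card_le_card <| filter_superset_subset_biUnion_insert hCX fun F hF => htrans F hF C hC
      _ ≤ #(C \ A) * d ^ m := card_biUnion_le_card_mul _ _ _ card_branch_le
      _ ≤ d * d ^ m := Nat.mul_le_mul_right _ (hd C hC)
      _ = d ^ (m + 1) := (pow_succ' d m).symm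

theorem card_le_sum_pow_of_forall_inter_nonempty (hcard : ∀ F ∈ 𝒻, #F ≤ k)
    (htrans : ∀ F ∈ 𝒻, IsTransversal 𝒞 F) (hτ : ∀ T, IsTransversal 𝒞 T → k ≤ #T)
    (hd : ∀ C ∈ 𝒞, #(C \ A) ≤ d) (hA : ∀ F ∈ 𝒻, (A ∩ F).Nonempty) :
    #𝒻 ≤ ∑ S ∈ A.powerset.erase ∅, d ^ (k - #S) := by
  have trace_mem : ∀ F ∈ 𝒻, A ∩ F ∈ A.powerset.erase ∅ := fun F hF =>
    mem_erase.2 ⟨(hA F hF).ne_empty, mem_powerset.2 inter_subset_left⟩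
  calc #𝒻 = ∑ S ∈ A.powerset.erase ∅, #{F ∈ 𝒻 | A ∩ F = S} :=
        card_eq_sum_card_fiberwise trace_mem
    _ ≤ ∑ S ∈ A.powerset.erase ∅, #{F ∈ 𝒻 | S ⊆ F ∧ A ∩ F ⊆ S} := by
        gcongr with S _ F _
        rintro rfl
        exact ⟨inter_subset_right, Subset.rfl⟩
    _ ≤ ∑ S ∈ A.powerset.erase ∅, d ^ (k - #S) :=
        sum_le_sum fun S _ => card_filter_superset_le_pow hcard htrans hτ hd S

theorem sum_powerset_erase_empty_pow (A : Finset α) (d : ℕ) :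
    ∑ S ∈ A.powerset.erase ∅, d ^ (#A - #S) = (d + 1) ^ #A - d ^ #A := by
  have binomial : ∑ S ∈ A.powerset, d ^ (#A - #S) = (d + 1) ^ #A := by
    simpa only [one_pow, one_mul, add_comm 1 d] using sum_pow_mul_eq_add_pow 1 d A
  rw [← binomial, ← sum_erase_add _ _ (empty_mem_powerset A), card_empty, Nat.sub_zero,
    Nat.add_sub_cancel]

theorem stmt_17_general (hcard : ∀ F ∈ 𝒻, #F ≤ k) (h𝒞𝒻 : 𝒞 ⊆ 𝒻) (h𝒞 : 𝒞.Nonempty)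
    (htrans : ∀ F ∈ 𝒻, IsTransversal 𝒞 F) (hτ : ∀ T, IsTransversal 𝒞 T → k ≤ #T) :
    #𝒻 ≤ k ^ k - (k - 1) ^ k := by
  obtain ⟨A, hA⟩ := h𝒞
  have hA_card : #A = k := (hcard A (h𝒞𝒻 hA)).antisymm (hτ A (htrans A (h𝒞𝒻 hA)))
  have hA_meets : ∀ F ∈ 𝒻, (A ∩ F).Nonempty := fun F hF => htrans F hF A hA
  have card_sdiff_le : ∀ C ∈ 𝒞, #(C \ A) ≤ k - 1 := fun C hC => by
    have hinter := (htrans A (h𝒞𝒻 hA) C hC).card_pos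
    have hsplit := card_sdiff_add_card_inter C A
    have hC_card := hcard C (h𝒞𝒻 hC)
    omega
  have k_pos : 1 ≤ k := hA_card ▸ ((hA_meets A (h𝒞𝒻 hA)).mono inter_subset_left).card_pos
  calc #𝒻 ≤ ∑ S ∈ A.powerset.erase ∅, (k - 1) ^ (k - #S) :=
        card_le_sum_pow_of_forall_inter_nonempty hcard htrans hτ card_sdiff_le hA_meets
    _ = k ^ k - (k - 1) ^ k := by
        simpa only [hA_card, Nat.sub_add_cancel k_pos] using sum_powerset_erase_empty_pow A (k - 1)

end

/-- Let `𝒻` be a family of 3-element subsets of `[n]` and `𝒞 ⊆ 𝒻` a nonempty subfamily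
each of whose members intersects every member of `𝒻`.  If no subset of `[n]` of size at
most 2 intersects every member of `𝒞` (i.e. `τ(𝒞) = 3`), then `|𝒻| ≤ 19`. -/
theorem stmt_17 (n : ℕ) (𝒻 𝒞 : Finset (Finset ℕ))
    (hsub : ∀ F ∈ 𝒻, F ⊆ Finset.Icc 1 n) (hcard : ∀ F ∈ 𝒻, F.card = 3)
    (h𝒞sub : 𝒞 ⊆ 𝒻) (h𝒞ne : 𝒞.Nonempty)
    (htrans : ∀ C ∈ 𝒞, ∀ F ∈ 𝒻, (C ∩ F).Nonempty)
    (htau : ∀ T ⊆ Finset.Icc 1 n, T.card ≤ 2 → ∃ C ∈ 𝒞, C ∩ T = ∅) :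
    𝒻.card ≤ 19 :=
  stmt_17_general (fun F hF => (hcard F hF).le) h𝒞sub h𝒞ne
    (fun F hF C hC => htrans C hC F hF) fun _ hT =>
      hT.le_card_of_forall_subset (fun C hC => hsub C (h𝒞sub hC)) fun T hTU hT_card =>
        htau T hTU (Nat.le_of_lt_succ hT_card)
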